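/- Suppose the feasible set of Problem 3 is nonempty. Then there exists ρ₀ > 0 such that for all ρ > ρ₀, the optimal value of the penalized Problem 5 equals the optimal value Ē* of Problem 3, where Problem 5 is obtained from Problem 3 by: replacing variables p by e via e = t·p and the successful transmission constraints by N_S·D(l)·y(S,k,l) ≤ (B/T)·∑_ω q(ω)·φ_{H(ω)(k)/n₀}(t(ω,S,l), e(ω,S,l)) for all S ∈ I, k ∈ S, l ∈ {1,…,L}; relaxing the binary constraints y(S,k,l) ∈ {0,1} to 0 ≤ y(S,k,l) ≤ 1; and adding the penalty term ρ·P(y), P(y) = ∑_{S∈I} ∑_{k∈S} ∑_{l=1}^{L} y(S,k,l)·(1 − y(S,k,l)), to the objective ∑_ω q(ω)·∑_{S∈I} ∑_{l=1}^{L} e(ω,S,l) + β·∑_{S∈I} ∑_{k∈S} N_S·E(k)·(∑_{l=1}^{L} l·y(S,k,l) − r(k)). -/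

import Mathlib

/-- `φ_a(t,e) = t·log₂(1 + a·e/t)` for `t > 0`, extended by `0` for `t ≤ 0`. -/
noncomputable def phi (a t e : ℝ) : ℝ :=
  if 0 < t then t * (Real.log (1 + a * e / t) / Real.log 2) else 0

lemma phi_conv (t e h n : ℝ) (ht : 0 ≤ t) :
    t * (Real.log (1 + (e / t) * h / n) / Real.log 2) = phi (h / n) t e := by
  unfold phi
  split_ifs with h0
  · have : e / t * h / n = h / n * e / t := by ring
    rw [this]
  · have : t = 0 := le_antisymm (not_lt.1 h0) ht
    simp [this]

lemma phi_conv' (t p h n : ℝ) (ht : 0 ≤ t) :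
    phi (h / n) t (t * p) = t * (Real.log (1 + p * h / n) / Real.log 2) := by
  unfold phi
  split_ifs with h0
  · have : h / n * (t * p) / t = p * h / n := by field_simp
    rw [this]
  · have : t = 0 := le_antisymm (not_lt.1 h0) ht
    simp [this]

lemma phi_homog (a t e c : ℝ) (hc : 0 ≤ c) : phi a (c * t) (c * e) = c * phi a t e := by
  rcases hc.eq_or_lt with rfl | hc
  · simp [phi]
  · unfold phi
    have : 0 < c * t ↔ 0 < t := by simp [hc]
    simp only [this]
    split_ifs with h0
    · have : a * (c * e) / (c * t) = a * e / t := by field_simp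
      rw [this]; ring
    · simp

lemma phi_mono (a t e e' : ℝ) (ha : 0 < a) (he : 0 ≤ e) (hee : e ≤ e') :
    phi a t e ≤ phi a t e' := by
  unfold phi
  split_ifs with h0
  · have h2 : 0 < Real.log 2 := Real.log_pos (by norm_num)
    have : 0 ≤ a * e / t := by positivity
    gcongr
  · exact le_rfl

lemma phi_superadd (a t t' e e' : ℝ) (ha : 0 < a) (ht : 0 ≤ t) (ht' : 0 ≤ t')
    (he : 0 ≤ e) (he' : 0 ≤ e') :
    phi a t e + phi a t' e' ≤ phi a (t + t') (e + e') := by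
  rcases ht.eq_or_lt with rfl | ht
  · have h := phi_mono a t' e' (e + e') ha he' (by linarith)
    have : phi a 0 e = 0 := by simp [phi]
    simpa [this] using h
  rcases ht'.eq_or_lt with rfl | ht'
  · have h := phi_mono a t e (e + e') ha he (by linarith)
    have : phi a 0 e' = 0 := by simp [phi]
    simpa [this] using h
  have h2 : 0 < Real.log 2 := Real.log_pos (by norm_num)
  have hs : 0 < t + t' := by positivity
  simp only [phi, if_pos ht, if_pos ht', if_pos hs]
  have hx : (1 + a * e / t) ∈ Set.Ioi (0 : ℝ) := by
    have : 0 ≤ a * e / t := by positivity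
    simp only [Set.mem_Ioi]; linarith
  have hy : (1 + a * e' / t') ∈ Set.Ioi (0 : ℝ) := by
    have : 0 ≤ a * e' / t' := by positivity
    simp only [Set.mem_Ioi]; linarith
  have h := strictConcaveOn_log_Ioi.concaveOn.2 hx hy
    (show 0 ≤ t / (t + t') by positivity) (show 0 ≤ t' / (t + t') by positivity)
    (by field_simp)
  simp only [smul_eq_mul] at h
  have e1 : t / (t + t') * (1 + a * e / t) + t' / (t + t') * (1 + a * e' / t')
      = 1 + a * (e + e') / (t + t') := by field_simp; ring
  rw [e1] at h
  have h3 := mul_le_mul_of_nonneg_left h hs.le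
  have e2 : (t + t') * (t / (t + t') * Real.log (1 + a * e / t) +
      t' / (t + t') * Real.log (1 + a * e' / t')) =
      t * Real.log (1 + a * e / t) + t' * Real.log (1 + a * e' / t') := by field_simp
  rw [e2] at h3
  rw [← mul_div_assoc, ← mul_div_assoc, ← mul_div_assoc, ← add_div]
  gcongr

lemma phi_concave (a t t' e e' c : ℝ) (ha : 0 < a) (ht : 0 ≤ t) (ht' : 0 ≤ t')
    (he : 0 ≤ e) (he' : 0 ≤ e') (hc : 0 ≤ c) (hc1 : c ≤ 1) :
    (1 - c) * phi a t e + c * phi a t' e' ≤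
      phi a ((1 - c) * t + c * t') ((1 - c) * e + c * e') := by
  have h1 : 0 ≤ 1 - c := by linarith
  rw [← phi_homog _ _ _ _ h1, ← phi_homog _ _ _ _ hc]
  exact phi_superadd _ _ _ _ _ ha (by positivity) (by positivity) (by positivity) (by positivity)

lemma phi_tendsto (a t : ℝ) (ha : 0 < a) (ht : 0 < t) :
    Filter.Tendsto (fun e => phi a t e) Filter.atTop Filter.atTop := by
  have h2 : 0 < Real.log 2 := Real.log_pos (by norm_num)
  simp only [phi, if_pos ht]
  apply Filter.Tendsto.const_mul_atTop ht
  apply Filter.Tendsto.atTop_div_const h2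
  apply Real.tendsto_log_atTop.comp
  apply Filter.tendsto_atTop_add_const_left
  apply Filter.Tendsto.atTop_div_const ht
  exact Filter.Tendsto.const_mul_atTop ha Filter.tendsto_id

lemma rounding (L : ℕ) (r : Fin L) (y : Fin L → ℝ) (h01 : ∀ l, 0 ≤ y l ∧ y l ≤ 1)
    (h1 : ∑ l, y l = 1)
    (hr : ((r : ℕ) + 1 : ℝ) ≤ ∑ l : Fin L, ((l : ℕ) + 1 : ℝ) * y l) :
    ∃ l : Fin L, r ≤ l ∧ 1 - y l ≤ (L : ℝ) ^ 2 * ∑ l, y l * (1 - y l) := by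
  have hLpos : 1 ≤ L := by have := r.2; omega
  have hL1 : (1 : ℝ) ≤ L := by exact_mod_cast hLpos
  haveI : Nonempty (Fin L) := ⟨r⟩
  obtain ⟨m, -, hm⟩ := Finset.exists_max_image (Finset.univ : Finset (Fin L)) y ⟨r, Finset.mem_univ _⟩
  have hmL : 1 ≤ L * y m := by
    calc 1 = ∑ l, y l := h1.symm
      _ ≤ ∑ l : Fin L, y m := Finset.sum_le_sum fun l hl => hm l hl
      _ = L * y m := by simp
  have hP : y m * (1 - y m) ≤ ∑ l, y l * (1 - y l) :=
    Finset.single_le_sum (f := fun l => y l * (1 - y l))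
      (fun l _ => mul_nonneg (h01 l).1 (by linarith [(h01 l).2])) (Finset.mem_univ m)
  have hm1 : 0 ≤ 1 - y m := by linarith [(h01 m).2]
  have hkey : L * (1 - y m) ≤ (L : ℝ) ^ 2 * ∑ l, y l * (1 - y l) := by
    calc (L : ℝ) * (1 - y m) ≤ L * ((L * y m) * (1 - y m)) := by
          gcongr; exact le_mul_of_one_le_left hm1 hmL
      _ = L ^ 2 * (y m * (1 - y m)) := by ring
      _ ≤ _ := by gcongr
  by_cases hrm : r ≤ m
  · exact ⟨m, hrm, le_trans (le_mul_of_one_le_left hm1 hL1) hkey⟩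
  · refine ⟨r, le_rfl, ?_⟩
    have hmr : (m : ℕ) + 1 ≤ r := by
      have := not_le.1 hrm
      exact this
    have hmr' : ((m : ℕ) : ℝ) + 1 ≤ (r : ℕ) := by exact_mod_cast hmr
    have hup : ∑ l : Fin L, ((l : ℕ) + 1 : ℝ) * y l ≤
        ∑ l : Fin L, ((L : ℝ) * y l - if l = m then (L - (m + 1 : ℝ)) * y m else 0) := by
      apply Finset.sum_le_sum
      intro l _
      split_ifs with hl
      · subst hl; linarith
      · have : ((l : ℕ) : ℝ) + 1 ≤ L := by exact_mod_cast l.2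
        have := mul_le_mul_of_nonneg_right this (h01 l).1
        linarith
    rw [Finset.sum_sub_distrib, ← Finset.mul_sum, h1] at hup
    simp only [Finset.sum_ite_eq', Finset.mem_univ, if_true] at hup
    have hm0 : (0 : ℝ) ≤ (m : ℕ) := Nat.cast_nonneg _
    have : 1 ≤ L * (1 - y m) := by
      nlinarith
    linarith [(h01 r).1]

/-- Exact penalty: if the feasible set of Problem 3 (energy
minimization with user transcoding, binary selection variables `y`) is
nonempty, then there exists `ρ₀ > 0` such that for all `ρ > ρ₀` the optimal
value of the penalized DC Problem 5 (change of variables `e = t·p`, binary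
constraints relaxed to `0 ≤ y ≤ 1`, penalty `ρ·∑ y·(1−y)` added to the
objective) equals the optimal value `Ē*` of Problem 3.
Quality levels `{1,…,L}` are modeled by `Fin L`, the level value of `l : Fin L`
being `(l : ℕ) + 1`. -/
theorem stmt_12 {ι Ω : Type*} [Fintype ι] [Fintype Ω] [Nonempty Ω]
    (L : ℕ) (hL : 1 ≤ L)
    (D : Fin L → ℝ) (hDpos : ∀ l, 0 < D l) (hDmono : StrictMono D)
    (r : ι → Fin L)
    (q : Ω → ℝ) (hq : ∀ ω, 0 ≤ q ω) (hq1 : ∑ ω, q ω = 1)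
    (H : Ω → ι → ℝ) (hH : ∀ ω k, 0 < H ω k)
    (B T n₀ : ℝ) (hB : 0 < B) (hT : 0 < T) (hn₀ : 0 < n₀)
    (I : Finset (Finset ι)) (hI : ∀ S ∈ I, S.Nonempty)
    (N : Finset ι → ℕ) (hN : ∀ S ∈ I, 0 < N S)
    (E : ι → ℝ) (hE : ∀ k, 0 ≤ E k) (β : ℝ) (hβ : 1 ≤ β)
    -- feasible set of Problem 3 (variables (y, t, p))
    (Feas3 : Set ((Finset ι → ι → Fin L → ℝ) ×
      (Ω → Finset ι → Fin L → ℝ) × (Ω → Finset ι → Fin L → ℝ)))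
    (hFeas3 : Feas3 =
      {ytp | (∀ ω S l, 0 ≤ ytp.2.1 ω S l) ∧ (∀ ω S l, 0 ≤ ytp.2.2 ω S l) ∧
        (∀ ω, ∑ S ∈ I, ∑ l, ytp.2.1 ω S l ≤ T) ∧
        (∀ S ∈ I, ∀ k ∈ S, ∀ l, ytp.1 S k l = 0 ∨ ytp.1 S k l = 1) ∧
        (∀ S ∈ I, ∀ k ∈ S, ∑ l, ytp.1 S k l = 1) ∧
        (∀ S ∈ I, ∀ k ∈ S,
          ((r k : ℕ) + 1 : ℝ) ≤ ∑ l : Fin L, ((l : ℕ) + 1 : ℝ) * ytp.1 S k l) ∧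
        (∀ S ∈ I, ∀ k ∈ S, ∀ l, (N S : ℝ) * D l * ytp.1 S k l ≤
          (B / T) * ∑ ω, q ω * (ytp.2.1 ω S l *
            (Real.log (1 + ytp.2.2 ω S l * H ω k / n₀) / Real.log 2)))})
    (hne : Feas3.Nonempty)
    -- feasible set of Problem 5 (variables (y, t, e), relaxed y)
    (Feas5 : Set ((Finset ι → ι → Fin L → ℝ) ×
      (Ω → Finset ι → Fin L → ℝ) × (Ω → Finset ι → Fin L → ℝ)))
    (hFeas5 : Feas5 =
      {yte | (∀ ω S l, 0 ≤ yte.2.1 ω S l) ∧ (∀ ω S l, 0 ≤ yte.2.2 ω S l) ∧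
        (∀ ω, ∑ S ∈ I, ∑ l, yte.2.1 ω S l ≤ T) ∧
        (∀ S ∈ I, ∀ k ∈ S, ∀ l, 0 ≤ yte.1 S k l ∧ yte.1 S k l ≤ 1) ∧
        (∀ S ∈ I, ∀ k ∈ S, ∑ l, yte.1 S k l = 1) ∧
        (∀ S ∈ I, ∀ k ∈ S,
          ((r k : ℕ) + 1 : ℝ) ≤ ∑ l : Fin L, ((l : ℕ) + 1 : ℝ) * yte.1 S k l) ∧
        (∀ S ∈ I, ∀ k ∈ S, ∀ l, (N S : ℝ) * D l * yte.1 S k l ≤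
          (B / T) * ∑ ω, q ω *
            phi (H ω k / n₀) (yte.2.1 ω S l) (yte.2.2 ω S l))}) :
    ∃ ρ₀ > (0 : ℝ), ∀ ρ > ρ₀,
      sInf ((fun yte : (Finset ι → ι → Fin L → ℝ) ×
          (Ω → Finset ι → Fin L → ℝ) × (Ω → Finset ι → Fin L → ℝ) =>
          (∑ ω, q ω * ∑ S ∈ I, ∑ l, yte.2.2 ω S l) +
          β * ∑ S ∈ I, ∑ k ∈ S, (N S : ℝ) * E k *
            ((∑ l : Fin L, ((l : ℕ) + 1 : ℝ) * yte.1 S k l) -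
              ((r k : ℕ) + 1 : ℝ)) +
          ρ * ∑ S ∈ I, ∑ k ∈ S, ∑ l : Fin L,
            yte.1 S k l * (1 - yte.1 S k l)) '' Feas5) =
      sInf ((fun ytp : (Finset ι → ι → Fin L → ℝ) ×
          (Ω → Finset ι → Fin L → ℝ) × (Ω → Finset ι → Fin L → ℝ) =>
          (∑ ω, q ω * ∑ S ∈ I, ∑ l, ytp.2.1 ω S l * ytp.2.2 ω S l) +
          β * ∑ S ∈ I, ∑ k ∈ S, (N S : ℝ) * E k *
            ((∑ l : Fin L, ((l : ℕ) + 1 : ℝ) * ytp.1 S k l) -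
              ((r k : ℕ) + 1 : ℝ))) '' Feas3) := by
  classical
  have hlog2 : 0 < Real.log 2 := Real.log_pos (by norm_num)
  have hL1 : (1 : ℝ) ≤ L := by exact_mod_cast hL
  -- a Slater point
  obtain ⟨t₀, ht₀, ht₀T⟩ : ∃ t₀ : ℝ, 0 < t₀ ∧ (I.card : ℝ) * (L * t₀) ≤ T := by
    refine ⟨T / (I.card * L + 1), by positivity, ?_⟩
    rw [← mul_assoc, mul_div_assoc', div_le_iff₀ (by positivity)]
    nlinarith
  obtain ⟨c, hc0, hc⟩ : ∃ c : ℝ, 0 ≤ c ∧ ∀ ω k,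
      (T / B) * (2 * ∑ S ∈ I, ∑ l, (N S : ℝ) * D l) ≤ phi (H ω k / n₀) t₀ c := by
    have h1 : ∀ᶠ c in Filter.atTop, ∀ ω k,
        (T / B) * (2 * ∑ S ∈ I, ∑ l, (N S : ℝ) * D l) ≤ phi (H ω k / n₀) t₀ c := by
      rw [Filter.eventually_all]; intro ω
      rw [Filter.eventually_all]; intro k
      exact (phi_tendsto _ _ (div_pos (hH ω k) hn₀) ht₀).eventually_ge_atTop _
    obtain ⟨c, h⟩ := ((Filter.eventually_ge_atTop (0 : ℝ)).and h1).exists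
    exact ⟨c, h⟩
  have hslater : ∀ S ∈ I, ∀ k ∈ S, ∀ l, (N S : ℝ) * D l * 2 ≤
      (B / T) * ∑ ω, q ω * phi (H ω k / n₀) t₀ c := by
    intro S hS k hk l
    have h1 : (N S : ℝ) * D l ≤ ∑ S ∈ I, ∑ l, (N S : ℝ) * D l := by
      refine le_trans ?_ (Finset.single_le_sum (f := fun S => ∑ l, (N S : ℝ) * D l) ?_ hS)
      · exact Finset.single_le_sum (f := fun l => (N S : ℝ) * D l)
          (fun l _ => mul_nonneg (Nat.cast_nonneg _) (hDpos l).le) (Finset.mem_univ l)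
      · exact fun S _ => Finset.sum_nonneg fun l _ =>
          mul_nonneg (Nat.cast_nonneg _) (hDpos l).le
    have h2 : (T / B) * (2 * ∑ S ∈ I, ∑ l, (N S : ℝ) * D l) ≤
        ∑ ω, q ω * phi (H ω k / n₀) t₀ c := by
      calc _ = ∑ ω, q ω * ((T / B) * (2 * ∑ S ∈ I, ∑ l, (N S : ℝ) * D l)) := by
            rw [← Finset.sum_mul, hq1, one_mul]
        _ ≤ _ := Finset.sum_le_sum fun ω _ => mul_le_mul_of_nonneg_left (hc ω k) (hq ω)
    have h3 := mul_le_mul_of_nonneg_left h2 (show 0 ≤ B / T by positivity)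
    have h4 : B / T * ((T / B) * (2 * ∑ S ∈ I, ∑ l, (N S : ℝ) * D l)) =
        2 * ∑ S ∈ I, ∑ l, (N S : ℝ) * D l := by field_simp
    linarith
  set M : ℝ := (I.card : ℝ) * (L * c) with hM
  have hM0 : 0 ≤ M := by positivity
  set W : ℝ := β * ∑ S ∈ I, ∑ k ∈ S, (N S : ℝ) * E k * L with hW
  have hβ0 : 0 ≤ β := by linarith
  have hNE : ∀ S k, 0 ≤ (N S : ℝ) * E k := fun S k => mul_nonneg (Nat.cast_nonneg _) (hE k)
  have hW0 : 0 ≤ W := mul_nonneg hβ0 (Finset.sum_nonneg fun S _ => Finset.sum_nonneg fun k _ =>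
    mul_nonneg (hNE S k) (by positivity))
  refine ⟨(M + W) * L ^ 2 + 1, by positivity, ?_⟩
  intro ρ hρ
  have hρ0 : 0 ≤ ρ := by
    have : 0 ≤ (M + W) * (L : ℝ) ^ 2 := by positivity
    linarith
  -- inclusion of Problem 3 in Problem 5
  have incl : ∀ x ∈ Feas3, (x.1, x.2.1, fun ω S l => x.2.1 ω S l * x.2.2 ω S l) ∈ Feas5 := by
    rintro ⟨y, t, p⟩ hx
    rw [hFeas3] at hx
    rw [hFeas5]
    obtain ⟨h1, h2, h3, h4, h5, h6, h7⟩ := hx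
    refine ⟨h1, fun ω S l => mul_nonneg (h1 ω S l) (h2 ω S l), h3, ?_, h5, h6, ?_⟩
    · intro S hS k hk l
      rcases h4 S hS k hk l with h | h <;> simp only at h ⊢ <;> rw [h] <;> norm_num
    · intro S hS k hk l
      refine (h7 S hS k hk l).trans (le_of_eq ?_)
      congr 1
      refine Finset.sum_congr rfl fun ω _ => ?_
      simp only
      rw [phi_conv' _ _ _ _ (h1 ω S l)]
  apply le_antisymm
  · apply le_csInf (hne.image _)
    rintro _ ⟨x, hx, rfl⟩
    refine csInf_le ?_ ?_
    · refine ⟨0, ?_⟩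
      rintro _ ⟨⟨y, t, e⟩, hx, rfl⟩
      rw [hFeas5] at hx
      obtain ⟨h1, h2, h3, h4, h5, h6, h7⟩ := hx
      simp only at h1 h2 h3 h4 h5 h6 h7 ⊢
      refine add_nonneg (add_nonneg ?_ ?_) ?_
      · exact Finset.sum_nonneg fun ω _ => mul_nonneg (hq ω) (Finset.sum_nonneg fun S _ =>
          Finset.sum_nonneg fun l _ => h2 ω S l)
      · exact mul_nonneg hβ0 (Finset.sum_nonneg fun S hS => Finset.sum_nonneg fun k hk =>
          mul_nonneg (hNE S k) (sub_nonneg.2 (h6 S hS k hk)))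
      · exact mul_nonneg hρ0 (Finset.sum_nonneg fun S hS => Finset.sum_nonneg fun k hk =>
          Finset.sum_nonneg fun l _ => mul_nonneg (h4 S hS k hk l).1
            (sub_nonneg.2 (h4 S hS k hk l).2))
    · refine ⟨_, incl x hx, ?_⟩
      rw [hFeas3] at hx
      obtain ⟨h1, h2, h3, h4, h5, h6, h7⟩ := hx
      simp only
      rw [add_eq_left]
      apply mul_eq_zero_of_right
      refine Finset.sum_eq_zero fun S hS => Finset.sum_eq_zero fun k hk =>
        Finset.sum_eq_zero fun l _ => ?_
      rcases h4 S hS k hk l with h | h <;> rw [h] <;> norm_num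
  · obtain ⟨x₀, hx₀⟩ := hne
    apply le_csInf (Set.Nonempty.image _ ⟨_, incl x₀ hx₀⟩)
    rintro _ ⟨⟨y, t, e⟩, hx, rfl⟩
    rw [hFeas5] at hx
    obtain ⟨h1, h2, h3, h4, h5, h6, h7⟩ := hx
    simp only at h1 h2 h3 h4 h5 h6 h7 ⊢
    set P : ℝ := ∑ S ∈ I, ∑ k ∈ S, ∑ l : Fin L, y S k l * (1 - y S k l) with hPdef
    have hterm : ∀ S ∈ I, ∀ k ∈ S, 0 ≤ ∑ l : Fin L, y S k l * (1 - y S k l) :=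
      fun S hS k hk => Finset.sum_nonneg fun l _ => mul_nonneg (h4 S hS k hk l).1
            (sub_nonneg.2 (h4 S hS k hk l).2)
    have hPle : ∀ S ∈ I, ∀ k ∈ S, ∑ l : Fin L, y S k l * (1 - y S k l) ≤ P := by
      intro S hS k hk
      refine le_trans ?_ (Finset.single_le_sum
        (f := fun S => ∑ k ∈ S, ∑ l : Fin L, y S k l * (1 - y S k l))
        (fun S hS => Finset.sum_nonneg fun k hk => hterm S hS k hk) hS)
      exact Finset.single_le_sum (f := fun k => ∑ l : Fin L, y S k l * (1 - y S k l))
        (fun k hk => hterm S hS k hk) hk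
    have hP0 : 0 ≤ P := Finset.sum_nonneg fun S hS => Finset.sum_nonneg fun k hk =>
      hterm S hS k hk
    have hround : ∀ S k, ∃ l : Fin L, S ∈ I → k ∈ S →
        r k ≤ l ∧ 1 - y S k l ≤ (L : ℝ) ^ 2 * P := by
      intro S k
      by_cases hS : S ∈ I
      · by_cases hk : k ∈ S
        · obtain ⟨l, hl, hl'⟩ := rounding L (r k) (y S k) (h4 S hS k hk) (h5 S hS k hk)
            (h6 S hS k hk)
          refine ⟨l, fun _ _ => ⟨hl, hl'.trans ?_⟩⟩
          gcongr
          exact hPle S hS k hk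
        · exact ⟨r k, fun _ h => absurd h hk⟩
      · exact ⟨r k, fun h => absurd h hS⟩
    choose m hm using hround
    set lam : ℝ := min 1 ((L : ℝ) ^ 2 * P) with hlam
    have hlam0 : 0 ≤ lam := le_min zero_le_one (by positivity)
    have hlam1 : lam ≤ 1 := min_le_left _ _
    have hlamP : lam ≤ (L : ℝ) ^ 2 * P := min_le_right _ _
    have hmlam : ∀ S ∈ I, ∀ k ∈ S, 1 - y S k (m S k) ≤ lam := fun S hS k hk =>
      le_min (by linarith [(h4 S hS k hk (m S k)).1]) (hm S k hS hk).2
    have hl1 : 0 ≤ 1 - lam := by linarith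
    let y' : Finset ι → ι → Fin L → ℝ := fun S k l => if l = m S k then 1 else 0
    let t' : Ω → Finset ι → Fin L → ℝ := fun ω S l => (1 - lam) * t ω S l + lam * t₀
    let e' : Ω → Finset ι → Fin L → ℝ := fun ω S l => (1 - lam) * e ω S l + lam * c
    have ht' : ∀ ω S l, 0 ≤ t' ω S l := fun ω S l =>
      add_nonneg (mul_nonneg hl1 (h1 ω S l)) (mul_nonneg hlam0 ht₀.le)
    have he' : ∀ ω S l, 0 ≤ e' ω S l := fun ω S l =>
      add_nonneg (mul_nonneg hl1 (h2 ω S l)) (mul_nonneg hlam0 hc0)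
    have hysum : ∀ S k, ∑ l : Fin L, ((l : ℕ) + 1 : ℝ) * y' S k l = ((m S k : ℕ) : ℝ) + 1 := by
      intro S k
      simp [y']
    refine csInf_le_of_le (b := (∑ ω, q ω * ∑ S ∈ I, ∑ l, t' ω S l * (e' ω S l / t' ω S l)) +
          β * ∑ S ∈ I, ∑ k ∈ S, (N S : ℝ) * E k *
            ((∑ l : Fin L, ((l : ℕ) + 1 : ℝ) * y' S k l) -
              ((r k : ℕ) + 1 : ℝ))) ?_
      ⟨(y', t', fun ω S l => e' ω S l / t' ω S l), ?_, rfl⟩ ?_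
    · refine ⟨0, ?_⟩
      rintro _ ⟨⟨y, t, e⟩, hx, rfl⟩
      rw [hFeas3] at hx
      obtain ⟨h1, h2, h3, h4, h5, h6, h7⟩ := hx
      simp only at h1 h2 h3 h4 h5 h6 h7 ⊢
      refine add_nonneg ?_ ?_
      · exact Finset.sum_nonneg fun ω _ => mul_nonneg (hq ω) (Finset.sum_nonneg fun S _ =>
          Finset.sum_nonneg fun l _ => mul_nonneg (h1 ω S l) (h2 ω S l))
      · exact mul_nonneg hβ0 (Finset.sum_nonneg fun S hS => Finset.sum_nonneg fun k hk =>
          mul_nonneg (hNE S k) (sub_nonneg.2 (h6 S hS k hk)))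
    · rw [hFeas3]
      refine ⟨ht', fun ω S l => div_nonneg (he' ω S l) (ht' ω S l), ?_, ?_, ?_, ?_, ?_⟩
      · intro ω
        have : ∑ S ∈ I, ∑ l, t' ω S l =
            (1 - lam) * (∑ S ∈ I, ∑ l, t ω S l) + lam * (I.card * (L * t₀)) := by
          simp only [t', Finset.sum_add_distrib, ← Finset.mul_sum]
          simp
        simp only
        rw [this]
        nlinarith [mul_le_mul_of_nonneg_left (h3 ω) hl1, mul_le_mul_of_nonneg_left ht₀T hlam0]
      · intro S hS k hk l
        simp only [y']
        split_ifs <;> simp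
      · intro S hS k hk
        simp [y']
      · intro S hS k hk
        simp only [hysum]
        have := (hm S k hS hk).1
        have : ((r k : ℕ) : ℝ) ≤ (m S k : ℕ) := by exact_mod_cast this
        linarith
      · intro S hS k hk l
        simp only
        have hND : 0 ≤ (N S : ℝ) * D l := mul_nonneg (Nat.cast_nonneg _) (hDpos l).le
        have hyb : y' S k l ≤ (1 - lam) * y S k l + lam * 2 := by
          have hy0 := (h4 S hS k hk l).1
          have hy1 := (h4 S hS k hk l).2
          simp only [y']
          split_ifs with hl
          · have := hmlam S hS k hk
            rw [← hl] at this
            nlinarith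
          · positivity
        calc (N S : ℝ) * D l * y' S k l
            ≤ (N S : ℝ) * D l * ((1 - lam) * y S k l + lam * 2) := by gcongr
          _ = (1 - lam) * ((N S : ℝ) * D l * y S k l) + lam * ((N S : ℝ) * D l * 2) := by ring
          _ ≤ (1 - lam) * ((B / T) * ∑ ω, q ω * phi (H ω k / n₀) (t ω S l) (e ω S l)) +
              lam * ((B / T) * ∑ ω, q ω * phi (H ω k / n₀) t₀ c) :=
            add_le_add (mul_le_mul_of_nonneg_left (h7 S hS k hk l) hl1)
              (mul_le_mul_of_nonneg_left (hslater S hS k hk l) hlam0)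
          _ = (B / T) * ∑ ω, q ω * ((1 - lam) * phi (H ω k / n₀) (t ω S l) (e ω S l) +
              lam * phi (H ω k / n₀) t₀ c) := by
            rw [mul_left_comm, mul_left_comm lam, ← mul_add, Finset.mul_sum, Finset.mul_sum,
              ← Finset.sum_add_distrib]
            congr 1
            exact Finset.sum_congr rfl fun ω _ => by ring
          _ ≤ _ := by
            refine mul_le_mul_of_nonneg_left (Finset.sum_le_sum fun ω _ =>
              mul_le_mul_of_nonneg_left ?_ (hq ω)) (by positivity)
            rw [phi_conv _ _ _ _ (ht' ω S l)]
            exact phi_concave _ _ _ _ _ _ (div_pos (hH ω k) hn₀) (h1 ω S l) ht₀.le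
              (h2 ω S l) hc0 hlam0 hlam1
    · have hen : ∑ ω, q ω * ∑ S ∈ I, ∑ l, t' ω S l * (e' ω S l / t' ω S l) ≤
          (∑ ω, q ω * ∑ S ∈ I, ∑ l, e ω S l) + lam * M := by
        have hpt : ∀ ω, ∑ S ∈ I, ∑ l, t' ω S l * (e' ω S l / t' ω S l) ≤
            (∑ S ∈ I, ∑ l, e ω S l) + lam * M := by
          intro ω
          calc _ ≤ ∑ S ∈ I, ∑ l, (e ω S l + lam * c) := by
                refine Finset.sum_le_sum fun S _ => Finset.sum_le_sum fun l _ => ?_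
                have hb : e' ω S l ≤ e ω S l + lam * c := by
                  simp only [e']
                  nlinarith [mul_nonneg hlam0 (h2 ω S l)]
                refine le_trans ?_ hb
                rcases (ht' ω S l).eq_or_lt with h | h
                · rw [← h]; simpa using he' ω S l
                · rw [mul_div_cancel₀ _ h.ne']
            _ = _ := by
                simp only [Finset.sum_add_distrib]
                simp [hM]
                ring
        calc _ ≤ ∑ ω, q ω * ((∑ S ∈ I, ∑ l, e ω S l) + lam * M) :=
              Finset.sum_le_sum fun ω _ => mul_le_mul_of_nonneg_left (hpt ω) (hq ω)
          _ = _ := by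
              simp only [mul_add, Finset.sum_add_distrib]
              rw [← Finset.sum_mul, hq1, one_mul]
      have htr : β * ∑ S ∈ I, ∑ k ∈ S, (N S : ℝ) * E k *
            ((∑ l : Fin L, ((l : ℕ) + 1 : ℝ) * y' S k l) - ((r k : ℕ) + 1 : ℝ)) ≤
          β * (∑ S ∈ I, ∑ k ∈ S, (N S : ℝ) * E k *
            ((∑ l : Fin L, ((l : ℕ) + 1 : ℝ) * y S k l) - ((r k : ℕ) + 1 : ℝ))) + lam * W := by
        have hW' : lam * W = β * ∑ S ∈ I, ∑ k ∈ S, (N S : ℝ) * E k * L * lam := by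
          simp only [hW, ← Finset.sum_mul]
          ring
        rw [hW', ← mul_add, ← Finset.sum_add_distrib]
        refine mul_le_mul_of_nonneg_left (Finset.sum_le_sum fun S hS => ?_) hβ0
        rw [← Finset.sum_add_distrib]
        refine Finset.sum_le_sum fun k hk => ?_
        rw [mul_assoc _ (L : ℝ), ← mul_add]
        refine mul_le_mul_of_nonneg_left ?_ (hNE S k)
        rw [hysum]
        have hs : ((m S k : ℕ) + 1 : ℝ) * y S k (m S k) ≤
            ∑ l : Fin L, ((l : ℕ) + 1 : ℝ) * y S k l :=
          Finset.single_le_sum (f := fun l : Fin L => ((l : ℕ) + 1 : ℝ) * y S k l)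
            (fun l _ => mul_nonneg (by positivity) (h4 S hS k hk l).1) (Finset.mem_univ _)
        have hmL : ((m S k : ℕ) : ℝ) + 1 ≤ L := by exact_mod_cast (m S k).2
        have hb : ((m S k : ℕ) + 1 : ℝ) * (1 - y S k (m S k)) ≤ L * lam :=
          mul_le_mul hmL (hmlam S hS k hk) (sub_nonneg.2 (h4 S hS k hk _).2) (by positivity)
        linarith
      have hfin : lam * M + lam * W ≤ ρ * P := by
        calc lam * M + lam * W = (M + W) * lam := by ring
          _ ≤ (M + W) * (L ^ 2 * P) := by gcongr
          _ = ((M + W) * L ^ 2) * P := by ring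
          _ ≤ ρ * P := by gcongr; linarith
      linarith
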